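/- (Knese) Let f be analytic on 𝔻^d with sup_{𝔻^d}|f| ≤ 1, and suppose f depends on all d variables (for each r there exist two points of 𝔻^d differing only in the r-th coordinate at which f takes different values). Then equality ∑_{r=1}^d (1 − |λ^r|²)|∂f/∂λ^r(λ)| = 1 − |f(λ)|² holds at every λ ∈ 𝔻^d if and only if there is a (1+d) × (1+d) complex matrix V which is unitary and symmetric (equal to its own transpose), with block form V = [[A, B],[C, D]] where A ∈ ℂ, B is a 1×d row vector, C is a d×1 column vector, and D is a d×d matrix, such that for every λ ∈ 𝔻^d, writing E_λ = diag(λ¹,…,λ^d), the matrix I_d − D E_λ is invertible and f(λ) = A + B E_λ (I_d − D E_λ)^{-1} C. -/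

import Mathlib

open Finset Matrix

/-- The open polydisk `𝔻^d` in `ℂ^d`. -/
def Polydisk (d : ℕ) : Set (Fin d → ℂ) := {lam | ∀ r, ‖lam r‖ < 1}

/-!
If `f` is the transfer function of a unitary matrix `V = [[A, B], [C, D]]` and `h`, `k` are the
states of the systems given by `V` and its transpose, then the `r`-th partial derivative of `f` is
`k_r h_r`, and unitarity gives `∑ (1 - |z_r|²) |h_r|² = 1 - |f|²`. For symmetric `V` we have
`k = h`, which is the desired equality.

Conversely, near a point where no partial derivative of `f` vanishes, take `h_r` to be a
holomorphic square root of the `r`-th one. The equality now says that `(1, z h)` and `(f, h)` have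
the same norm at every point; by polarization they have the same inner products at any two points,
so a unitary `V` maps the first to the second. Thus `f` is the transfer function of `V`, with state
`h`. Comparing `h_r² = k_r h_r` gives `k = h`, and since the state determines `C` and `D`, `V` is
symmetric.
-/

open Filter Metric Set Topology
open scoped ComplexConjugate

section Holomorphic

variable {E F : Type*} [NormedAddCommGroup E] [NormedSpace ℂ E]
  [NormedAddCommGroup F] [NormedSpace ℂ F] {U : Set E}

theorem norm_fderiv_le_of_forall_norm_le {f : E → F} {x : E} {r M : ℝ} (hr : 0 < r)
    (hf : DifferentiableOn ℂ f (ball x r)) (hM : ∀ y ∈ ball x r, ‖f y‖ ≤ M) :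
    ‖fderiv ℂ f x‖ ≤ 2 * M / r := by
  refine Complex.norm_fderiv_le_div_of_mapsTo_ball hf (fun y hy => ?_) hr
  rw [mem_closedBall_iff_norm, two_mul]
  exact (norm_sub_le _ _).trans (add_le_add (hM y hy) (hM x (mem_ball_self hr)))

theorem uniformCauchySeqOn_fderiv {α : Type*} {l : Filter α} {g : α → E → F} {K : Set E} {r : ℝ}
    (hr : 0 < r) (hK : ∀ x ∈ K, ball x r ⊆ U) (hg : UniformCauchySeqOn g l U)
    (hd : ∀ᶠ n in l, DifferentiableOn ℂ (g n) U) :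
    UniformCauchySeqOn (fun n => fderiv ℂ (g n)) l K := by
  intro u hu
  obtain ⟨ε, hε, hεu⟩ := mem_uniformity_dist.1 hu
  filter_upwards [hg _ (dist_mem_uniformity (show 0 < ε * r / 4 by positivity)),
    hd.prod_inl l, hd.prod_inr l] with n hn hd₁ hd₂ x hx
  refine hεu ?_
  have hdiff : ∀ n, DifferentiableOn ℂ (g n) U → DifferentiableAt ℂ (g n) x := fun n hn =>
    hn.differentiableAt (mem_of_superset (ball_mem_nhds x hr) (hK x hx))
  have hbound := norm_fderiv_le_of_forall_norm_le hr ((hd₁.sub hd₂).mono (hK x hx))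
    (M := ε * r / 4) fun y hy => by
      simpa only [Pi.sub_apply, ← dist_eq_norm] using le_of_lt (hn y (hK x hx hy))
  rw [fderiv_sub (hdiff _ hd₁) (hdiff _ hd₂), ← dist_eq_norm] at hbound
  calc _ ≤ 2 * (ε * r / 4) / r := hbound
    _ = ε / 2 := by field_simp; norm_num
    _ < ε := half_lt_self hε

theorem differentiableOn_of_tendstoUniformlyOn [CompleteSpace F] {α : Type*} {l : Filter α}
    [l.NeBot] {g : α → E → F} {f : E → F} (hU : IsOpen U) (hg : TendstoUniformlyOn g f l U)
    (hd : ∀ᶠ n in l, DifferentiableOn ℂ (g n) U) : DifferentiableOn ℂ f U := by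
  intro x hx
  obtain ⟨r, hr, hrU⟩ := Metric.isOpen_iff.1 hU x hx
  have hball : ∀ y ∈ ball x (r / 2), ball y (r / 2) ⊆ U := fun y hy =>
    (ball_subset_ball' (by linarith [mem_ball.1 hy])).trans hrU
  have hcauchy := uniformCauchySeqOn_fderiv (half_pos hr) hball hg.uniformCauchySeqOn hd
  choose! g' hg' using fun y (hy : y ∈ ball x (r / 2)) =>
    CompleteSpace.complete (hcauchy.cauchy_map hy)
  have hmem : ball x (r / 2) ∈ 𝓝 x := ball_mem_nhds x (half_pos hr)
  have hunif : TendstoUniformlyOnFilter (fun n => fderiv ℂ (g n)) g' l (𝓝 x) :=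
    (hcauchy.tendstoUniformlyOn_of_tendsto hg').tendstoUniformlyOnFilter.mono_right
      (le_principal_iff.2 hmem)
  have hUx := hU.mem_nhds hx
  refine (hasFDerivAt_of_tendstoUniformlyOnFilter (f := g) hunif ?_ ?_).differentiableAt
    |>.differentiableWithinAt
  · filter_upwards [hd.prod_mk (hU.eventually_mem hx)] with n hn
    exact (hn.1.differentiableAt (hU.mem_nhds hn.2)).hasFDerivAt
  · exact mem_of_superset hUx fun y hy => hg.tendsto_at hy

theorem norm_dslope_sub_deriv_le [CompleteSpace F] {f : ℂ → F} {c z : ℂ} {R₁ R₂ : ℝ}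
    (hd : DifferentiableOn ℂ f (ball c R₁)) (hmaps : MapsTo f (ball c R₁) (closedBall (f c) R₂))
    (hz : z ∈ ball c R₁) :
    ‖dslope f c z - deriv f c‖ ≤ 2 * (R₂ / R₁) / R₁ * ‖z - c‖ := by
  have hR : 0 < R₁ := pos_of_mem_ball hz
  have hslope : ∀ w ∈ ball c R₁, ‖dslope f c w‖ ≤ R₂ / R₁ := fun w hw =>
    Complex.norm_dslope_le_div_of_mapsTo_ball hd hmaps hw
  have hmaps' : MapsTo (dslope f c) (ball c R₁) (closedBall (dslope f c c) (2 * (R₂ / R₁))) := by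
    intro w hw
    rw [mem_closedBall_iff_norm, two_mul]
    exact (norm_sub_le _ _).trans (add_le_add (hslope w hw) (hslope c (mem_ball_self hR)))
  have hd' := (Complex.differentiableOn_dslope (ball_mem_nhds c hR)).2 hd
  simpa only [dist_eq_norm, dslope_same] using
    Complex.dist_le_div_mul_dist_of_mapsTo_ball hd' hmaps' hz

theorem norm_slope_sub_fderiv_apply_le [CompleteSpace F] {f : E → F} {x v : E} {s : ℂ} {ρ M : ℝ}
    (hd : ∀ s ∈ ball (0 : ℂ) ρ, DifferentiableAt ℂ f (x + s • v))
    (hM : ∀ s ∈ ball (0 : ℂ) ρ, ‖f (x + s • v) - f x‖ ≤ M) (hs : s ∈ ball (0 : ℂ) ρ)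
    (hs₀ : s ≠ 0) :
    ‖s⁻¹ • (f (x + s • v) - f x) - fderiv ℂ f x v‖ ≤ 2 * (M / ρ) / ρ * ‖s‖ := by
  have hline : ∀ s : ℂ, HasDerivAt (fun s : ℂ => x + s • v) v s := fun s => by
    simpa using ((hasDerivAt_id s).smul_const v).const_add x
  have hderiv : deriv (fun s : ℂ => f (x + s • v)) 0 = fderiv ℂ f x v := by
    have hx : DifferentiableAt ℂ f (x + (0 : ℂ) • v) := hd 0 (mem_ball_self (pos_of_mem_ball hs))
    simpa [Function.comp_def] using (hx.hasFDerivAt.comp_hasDerivAt 0 (hline 0)).deriv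
  have := norm_dslope_sub_deriv_le (f := fun s : ℂ => f (x + s • v)) (R₂ := M)
    (fun s hs => ((hd s hs).comp s (hline s).differentiableAt).differentiableWithinAt)
    (fun s hs => by simpa [dist_eq_norm] using hM s hs) hs
  rwa [dslope_of_ne _ hs₀, slope_def_module, hderiv, sub_zero, zero_smul, add_zero] at this

theorem tendstoUniformlyOn_slope_fderiv_apply [CompleteSpace F] {f : E → F} {K : Set E} {v : E}
    {ρ M : ℝ} (hρ : 0 < ρ) (hU : IsOpen U) (hf : DifferentiableOn ℂ f U) (hM : ∀ x ∈ U, ‖f x‖ ≤ M)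
    (hK : ∀ x ∈ K, ∀ s ∈ ball (0 : ℂ) ρ, x + s • v ∈ U) :
    TendstoUniformlyOn (fun (s : ℂ) x => s⁻¹ • (f (x + s • v) - f x)) (fun x => fderiv ℂ f x v)
      (𝓝[≠] 0) K := by
  rw [Metric.tendstoUniformlyOn_iff]
  intro ε hε
  have hsmall : ∀ᶠ s : ℂ in 𝓝 0, 2 * ((M + M) / ρ) / ρ * ‖s‖ < ε :=
    ContinuousAt.eventually_lt (by fun_prop) continuousAt_const (by simpa using hε)
  filter_upwards [nhdsWithin_le_nhds hsmall, nhdsWithin_le_nhds (ball_mem_nhds 0 hρ),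
    self_mem_nhdsWithin] with s hsε hsρ hs₀ x hx
  rw [dist_comm, dist_eq_norm]
  refine (norm_slope_sub_fderiv_apply_le
    (fun s hs => hf.differentiableAt (hU.mem_nhds (hK x hx s hs)))
    (fun s hs => (norm_sub_le _ _).trans (add_le_add (hM _ (hK x hx s hs)) (hM x ?_)))
    hsρ hs₀).trans_lt hsε
  simpa using hK x hx 0 (mem_ball_self hρ)

theorem differentiableOn_fderiv_apply [CompleteSpace F] {f : E → F} (hU : IsOpen U)
    (hf : DifferentiableOn ℂ f U) (v : E) : DifferentiableOn ℂ (fun x => fderiv ℂ f x v) U := by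
  intro p hp
  set V : Set E := U ∩ f ⁻¹' ball 0 (‖f p‖ + 1)
  have hV : IsOpen V := hf.continuousOn.isOpen_inter_preimage hU isOpen_ball
  have hpV : p + (0 : ℂ) • v ∈ V := by simp [V, hp]
  have hshift : ∀ᶠ q : E × ℂ in 𝓝 (p, 0), q.1 + q.2 • v ∈ V :=
    ContinuousAt.preimage_mem_nhds (f := fun q : E × ℂ => q.1 + q.2 • v) (by fun_prop)
      (hV.mem_nhds hpV)
  obtain ⟨ρ, hρ, hball⟩ := Metric.mem_nhds_iff.1 hshift
  have hmem : ∀ x ∈ ball p ρ, ∀ s ∈ ball (0 : ℂ) ρ, x + s • v ∈ V := fun x hx s hs =>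
    hball ((ball_prod_same p (0 : ℂ) ρ).subset (mk_mem_prod hx hs))
  have hdiff : ∀ x ∈ V, DifferentiableAt ℂ f x := fun x hx =>
    hf.differentiableAt (hU.mem_nhds hx.1)
  have hlim := tendstoUniformlyOn_slope_fderiv_apply hρ hV (hf.mono inter_subset_left)
    (fun x hx => (mem_ball_zero_iff.1 hx.2).le) hmem
  refine ((differentiableOn_of_tendstoUniformlyOn isOpen_ball hlim ?_).differentiableAt
    (ball_mem_nhds p hρ)).differentiableWithinAt
  filter_upwards [nhdsWithin_le_nhds (ball_mem_nhds 0 hρ)] with s hs x hx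
  have hx₀ : x ∈ V := by simpa using hmem x hx 0 (mem_ball_self hρ)
  have hcomp : DifferentiableAt ℂ (fun x => f (x + s • v)) x :=
    (hdiff _ (hmem x hx s hs)).comp x (differentiableAt_id.add_const _)
  exact ((hcomp.sub (hdiff x hx₀)).const_smul s⁻¹).differentiableWithinAt

theorem convex_setOf_add_smul_mem (hc : Convex ℝ U) (x v : E) :
    Convex ℝ {s : ℂ | x + s • v ∈ U} :=
  (hc.translate_preimage_right x).linear_preimage
    ((LinearMap.toSpanSingleton ℂ E v).restrictScalars ℝ)

theorem eqOn_of_eventuallyEq_of_convex [CompleteSpace F] {f g : E → F} {p : E} (hU : IsOpen U)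
    (hc : Convex ℝ U) (hf : DifferentiableOn ℂ f U) (hg : DifferentiableOn ℂ g U) (hp : p ∈ U)
    (hfg : f =ᶠ[𝓝 p] g) : EqOn f g U := by
  intro z hz
  set line : ℂ → E := fun s => p + s • (z - p)
  have hline : Differentiable ℂ line := by fun_prop
  have hopen : IsOpen (line ⁻¹' U) := hU.preimage hline.continuous
  have hanalytic : ∀ h : E → F, DifferentiableOn ℂ h U →
      AnalyticOnNhd ℂ (h ∘ line) (line ⁻¹' U) := fun h hh =>
    (hh.comp hline.differentiableOn fun _ hs => hs).analyticOnNhd hopen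
  have hline₀ : line 0 = p := by simp [line]
  have hline₁ : line 1 = z := by simp [line]
  have hnear : f ∘ line =ᶠ[𝓝 0] g ∘ line :=
    (hline.continuous.tendsto' 0 p hline₀).eventually hfg
  have heq := (hanalytic f hf).eqOn_of_preconnected_of_eventuallyEq (hanalytic g hg)
    (convex_setOf_add_smul_mem hc p (z - p)).isPreconnected
    (show line 0 ∈ U from hline₀ ▸ hp) hnear (show line 1 ∈ U from hline₁ ▸ hz)
  simpa only [Function.comp_apply, hline₁] using heq

theorem exists_forall_ne_zero_of_convex {κ : Type*} {g : κ → E → ℂ} (hU : IsOpen U)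
    (hc : Convex ℝ U) (hne : U.Nonempty) (hg : ∀ k, DifferentiableOn ℂ (g k) U)
    (hg₀ : ∀ k, ∃ z ∈ U, g k z ≠ 0) (s : Finset κ) : ∃ z ∈ U, ∀ k ∈ s, g k z ≠ 0 := by
  classical
  induction s using Finset.induction_on with
  | empty => exact hne.imp fun z hz => ⟨hz, by simp⟩
  | insert k s _ ih =>
    obtain ⟨p, hp, hps⟩ := ih
    have hcont : ∀ j, ContinuousAt (g j) p := fun j =>
      (hg j).continuousOn.continuousAt (hU.mem_nhds hp)
    have hs : ∀ᶠ z in 𝓝 p, ∀ j ∈ s, g j z ≠ 0 :=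
      (Filter.eventually_all_finset s).2 fun j hj => (hcont j).eventually_ne (hps j hj)
    have hk : ∃ᶠ z in 𝓝 p, g k z ≠ 0 := by
      intro hzero
      obtain ⟨z, hz, hzk⟩ := hg₀ k
      exact hzk (eqOn_of_eventuallyEq_of_convex hU hc (hg k) (differentiableOn_const 0) hp
        (hzero.mono fun z hz => not_not.1 hz) hz)
    obtain ⟨z, ⟨hzk, hzs⟩, hzU⟩ := ((hk.and_eventually hs).and_eventually (hU.mem_nhds hp)).exists
    exact ⟨z, hzU, (Finset.forall_mem_insert _ _ _).2 ⟨hzk, hzs⟩⟩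

theorem exists_fderiv_sub_ne_zero {f : E → F} {x y : E} (hU : IsOpen U) (hc : Convex ℝ U)
    (hf : DifferentiableOn ℂ f U) (hx : x ∈ U) (hy : y ∈ U) (hxy : f x ≠ f y) :
    ∃ z ∈ U, fderiv ℂ f z (y - x) ≠ 0 := by
  by_contra! hzero
  have hmem : ∀ t ∈ Icc (0 : ℝ) 1, AffineMap.lineMap x y t ∈ U := fun t ht =>
    hc.lineMap_mem hx hy ht
  have hderiv : ∀ t ∈ Icc (0 : ℝ) 1, HasDerivAt (f ∘ AffineMap.lineMap x y) 0 t := fun t ht => by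
    have hft := (hf.differentiableAt (hU.mem_nhds (hmem t ht))).hasFDerivAt.restrictScalars ℝ
    simpa [hzero _ (hmem t ht)] using hft.comp_hasDerivAt t AffineMap.hasDerivAt_lineMap
  have hconst := constant_of_has_deriv_right_zero
    (fun t ht => (hderiv t ht).continuousAt.continuousWithinAt)
    (fun t ht => (hderiv t (Ico_subset_Icc_self ht)).hasDerivWithinAt) 1
    (right_mem_Icc.2 zero_le_one)
  exact hxy (by simpa using hconst.symm)

theorem exists_eventually_pow_eq {g : E → ℂ} {p : E} {n : ℕ} (hn : n ≠ 0)
    (hg : ∀ᶠ z in 𝓝 p, DifferentiableAt ℂ g z) (hp : g p ≠ 0) :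
    ∃ h : E → ℂ, ∀ᶠ z in 𝓝 p, DifferentiableAt ℂ h z ∧ h z ^ n = g z := by
  refine ⟨fun z => g p ^ (n⁻¹ : ℂ) * (g z / g p) ^ (n⁻¹ : ℂ), ?_⟩
  have hslit : ∀ᶠ z in 𝓝 p, g z / g p ∈ Complex.slitPlane :=
    (hg.self_of_nhds.continuousAt.div_const (g p)).preimage_mem_nhds
      (Complex.isOpen_slitPlane.mem_nhds (by simp [hp]))
  filter_upwards [hg, hslit] with z hz hzs
  refine ⟨((hz.mul_const _).cpow (differentiableAt_const _) hzs).const_mul _, ?_⟩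
  rw [mul_pow, Complex.cpow_nat_inv_pow _ hn, Complex.cpow_nat_inv_pow _ hn, mul_div_cancel₀ _ hp]

theorem differentiableAt_dotProduct_star_conj {κ : Type*} [Fintype κ] {u : ℂ → κ → ℂ} {s : ℂ}
    (hs : DifferentiableAt ℂ u s) (hs' : DifferentiableAt ℂ u (conj s)) :
    DifferentiableAt ℂ (fun s => u s ⬝ᵥ star (u (conj s))) s := by
  refine DifferentiableAt.fun_sum fun k _ => (differentiableAt_pi.1 hs k).mul ?_
  exact differentiableAt_star_conj_iff.2 (differentiableAt_pi.1 hs' k)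

theorem dotProduct_star_conj_eq_of_forall_real {κ : Type*} [Fintype κ] {S : Set ℂ}
    {X Y : ℂ → κ → ℂ} (hS : IsOpen S) (hSc : IsPreconnected S) (hconj : ∀ s ∈ S, conj s ∈ S)
    (hX : DifferentiableOn ℂ X S) (hY : DifferentiableOn ℂ Y S) {t₀ : ℝ} (ht₀ : (t₀ : ℂ) ∈ S)
    (h : ∀ t : ℝ, (t : ℂ) ∈ S → X t ⬝ᵥ star (X t) = Y t ⬝ᵥ star (Y t)) {s : ℂ} (hs : s ∈ S) :
    X s ⬝ᵥ star (X (conj s)) = Y s ⬝ᵥ star (Y (conj s)) := by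
  have hanalytic : ∀ V : ℂ → κ → ℂ, DifferentiableOn ℂ V S →
      AnalyticOnNhd ℂ (fun s => V s ⬝ᵥ star (V (conj s))) S := fun V hV =>
    DifferentiableOn.analyticOnNhd (fun s hs => (differentiableAt_dotProduct_star_conj
      (hV.differentiableAt (hS.mem_nhds hs))
      (hV.differentiableAt (hS.mem_nhds (hconj s hs)))).differentiableWithinAt) hS
  have hofReal : Tendsto (fun t : ℝ => (t : ℂ)) (𝓝[≠] t₀) (𝓝[≠] (t₀ : ℂ)) :=
    Complex.continuous_ofReal.continuousAt.continuousWithinAt.tendsto_nhdsWithin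
      fun t ht => by simpa using ht
  have hSt₀ : ∀ᶠ t : ℝ in 𝓝[≠] t₀, (t : ℂ) ∈ S :=
    (hofReal.mono_right nhdsWithin_le_nhds).eventually (hS.mem_nhds ht₀)
  refine (hanalytic X hX).eqOn_of_preconnected_of_frequently_eq (hanalytic Y hY) hSc ht₀
    (hofReal.frequently (hSt₀.mono fun t ht => ?_).frequently) hs
  simpa only [Complex.conj_ofReal] using h t ht

-- The previous lemma on the complex line `s ↦ (z + w) / 2 + s (z - w) / (2 i)`, at `s = i`.
theorem dotProduct_star_eq_of_forall_self {κ : Type*} [Fintype κ] {X Y : E → κ → ℂ}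
    (hU : IsOpen U) (hc : Convex ℝ U) (hX : DifferentiableOn ℂ X U) (hY : DifferentiableOn ℂ Y U)
    (h : ∀ z ∈ U, X z ⬝ᵥ star (X z) = Y z ⬝ᵥ star (Y z)) {z w : E} (hz : z ∈ U) (hw : w ∈ U) :
    X z ⬝ᵥ star (X w) = Y z ⬝ᵥ star (Y w) := by
  set line : ℂ → E := fun s => midpoint ℝ z w + s • ((2 * Complex.I)⁻¹ • (z - w))
  have hline : Differentiable ℂ line := by fun_prop
  set S : Set ℂ := {s | line s ∈ U} ∩ {s | line (conj s) ∈ U}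
  have hS : IsOpen S := (hU.preimage hline.continuous).inter
    (hU.preimage (hline.continuous.comp Complex.continuous_conj))
  have hSc : Convex ℝ S := (convex_setOf_add_smul_mem hc _ _).inter
    ((convex_setOf_add_smul_mem hc _ _).linear_preimage Complex.conjAe.toLinearMap)
  have hlineI : line Complex.I = z := by
    simp only [line, midpoint_eq_smul_add]
    match_scalars <;> field_simp <;> norm_num
  have hlineI' : line (conj Complex.I) = w := by
    simp only [line, Complex.conj_I, midpoint_eq_smul_add]
    match_scalars <;> field_simp <;> norm_num
  have hzero : ((0 : ℝ) : ℂ) ∈ S := by simp [S, line, hc.midpoint_mem hz hw]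
  have hI : Complex.I ∈ S :=
    ⟨show line _ ∈ U from hlineI.symm ▸ hz, show line _ ∈ U from hlineI'.symm ▸ hw⟩
  have hdiff : ∀ V : E → κ → ℂ, DifferentiableOn ℂ V U → DifferentiableOn ℂ (V ∘ line) S :=
    fun V hV => hV.comp hline.differentiableOn fun s hs => hs.1
  simpa only [Function.comp_apply, hlineI, hlineI'] using
    dotProduct_star_conj_eq_of_forall_real hS hSc.isPreconnected
      (fun s hs => ⟨hs.2, by simpa using hs.1⟩) (hdiff X hX) (hdiff Y hY) hzero
      (fun t ht => h _ ht.1) hI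

end Holomorphic

section LurkingIsometry

variable {𝕜 σ : Type*} [RCLike 𝕜]

theorem exists_linearIsometryEquiv_of_inner_eq {H : Type*} [NormedAddCommGroup H]
    [InnerProductSpace 𝕜 H] [FiniteDimensional 𝕜 H] {x y : σ → H}
    (h : ∀ i j, inner 𝕜 (x i) (x j) = inner 𝕜 (y i) (y j)) :
    ∃ V : H ≃ₗᵢ[𝕜] H, ∀ i, V (x i) = y i := by
  set L := Finsupp.linearCombination 𝕜 x
  set M := Finsupp.linearCombination 𝕜 y
  have hnorm : ∀ c, ‖M c‖ = ‖L c‖ := fun c => by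
    simp only [L, M, @norm_eq_sqrt_re_inner 𝕜, Finsupp.linearCombination_apply, Finsupp.sum_inner,
      Finsupp.inner_sum, inner_smul_left, inner_smul_right, h]
  obtain ⟨g, hg⟩ := L.rangeRestrict.exists_rightInverse_of_surjective L.range_rangeRestrict
  have hLg : ∀ u, L (g u) = u := fun u => congrArg Subtype.val (LinearMap.congr_fun hg u)
  let T : LinearMap.range L →ₗᵢ[𝕜] H := ⟨M ∘ₗ g, fun u => by
    rw [LinearMap.comp_apply, hnorm, hLg, Submodule.coe_norm]⟩
  have hT : ∀ c, T (L.rangeRestrict c) = M c := fun c => by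
    rw [← sub_eq_zero, ← norm_eq_zero]
    change ‖M (g (L.rangeRestrict c)) - M c‖ = 0
    rw [← map_sub, hnorm, map_sub, hLg, LinearMap.codRestrict_apply, sub_self, norm_zero]
  refine ⟨T.extend.toLinearIsometryEquiv rfl, fun i => ?_⟩
  have hx : x i = L.rangeRestrict (Finsupp.single i 1) := by simp [L]
  rw [LinearIsometry.toLinearIsometryEquiv_apply, hx, LinearIsometry.extend_apply, hT]
  simp [M]

theorem exists_mem_unitaryGroup_mulVec_eq {n : Type*} [Fintype n] [DecidableEq n] {x y : σ → n → 𝕜}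
    (h : ∀ i j, x i ⬝ᵥ star (x j) = y i ⬝ᵥ star (y j)) :
    ∃ V ∈ unitaryGroup n 𝕜, ∀ i, V *ᵥ x i = y i := by
  obtain ⟨T, hT⟩ := exists_linearIsometryEquiv_of_inner_eq (𝕜 := 𝕜)
    (x := fun i => WithLp.toLp 2 (x i)) (y := fun i => WithLp.toLp 2 (y i))
    fun i j => by simpa only [EuclideanSpace.inner_toLp_toLp] using h j i
  refine ⟨(toEuclideanCLM (n := n) (𝕜 := 𝕜)).symm (Unitary.linearIsometryEquiv.symm T),
    Unitary.map_mem _ (SetLike.coe_mem _), fun i => ?_⟩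
  have hVx := DFunLike.congr_fun (toEuclideanCLM (n := n) (𝕜 := 𝕜) |>.apply_symm_apply
    (Unitary.linearIsometryEquiv.symm T : EuclideanSpace 𝕜 n →L[𝕜] EuclideanSpace 𝕜 n))
    (WithLp.toLp 2 (x i))
  rw [toEuclideanCLM_toLp] at hVx
  exact WithLp.toLp_injective 2 (hVx.trans (hT i))

theorem mulVec_dotProduct_star_mulVec {n R : Type*} [Fintype n] [DecidableEq n] [CommRing R]
    [StarRing R] {V : Matrix n n R} (hV : V ∈ unitaryGroup n R) (x y : n → R) :
    (V *ᵥ x) ⬝ᵥ star (V *ᵥ y) = x ⬝ᵥ star y := by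
  rw [dotProduct_comm, star_mulVec, ← dotProduct_mulVec, mulVec_mulVec, ← star_eq_conjTranspose,
    mem_unitaryGroup_iff'.1 hV, one_mulVec, dotProduct_comm]

end LurkingIsometry

section Colligation

variable {ι : Type*}

/-- The system matrix `[[A, B], [C, D]]` of a multidimensional linear system with scalar input and
output and state indexed by `ι`; `Fin 1` indexes the scalar channel. -/
def colligation {R : Type*} (A : R) (B C : ι → R) (D : Matrix ι ι R) :
    Matrix (Fin 1 ⊕ ι) (Fin 1 ⊕ ι) R :=
  fromBlocks (of fun _ _ => A) (of fun _ j => B j) (of fun i _ => C i) D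

theorem exists_eq_colligation {R : Type*} (V : Matrix (Fin 1 ⊕ ι) (Fin 1 ⊕ ι) R) :
    ∃ A B C D, V = colligation A B C D :=
  ⟨V (.inl 0) (.inl 0), fun j => V (.inl 0) (.inr j), fun i => V (.inr i) (.inl 0), V.toBlocks₂₂, by
    ext (i | i) (j | j) <;> simp [colligation, toBlocks₂₂, Subsingleton.elim _ (0 : Fin 1)]⟩

theorem isSymm_colligation_iff {R : Type*} {A : R} {B C : ι → R} {D : Matrix ι ι R} :
    (colligation A B C D).IsSymm ↔ B = C ∧ D.IsSymm := by
  rw [colligation, isSymm_fromBlocks_iff]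
  refine ⟨fun ⟨_, hBC, _, hD⟩ => ⟨funext fun i => congrFun₂ hBC i 0, hD⟩, ?_⟩
  rintro ⟨rfl, hD⟩
  exact ⟨rfl, rfl, rfl, hD⟩

section Algebra

variable {R : Type*} [CommRing R] [Fintype ι] {A : R} {B C : ι → R} {D : Matrix ι ι R}
  {z w h k : ι → R}

theorem colligation_mulVec (a : R) (u : ι → R) :
    colligation A B C D *ᵥ Sum.elim (fun _ => a) u =
      Sum.elim (fun _ => A * a + B ⬝ᵥ u) (a • C + D *ᵥ u) := by
  rw [colligation, fromBlocks_mulVec]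
  ext (i | i) <;> simp [mulVec, dotProduct, mul_comm]

theorem dotProduct_mul_state_eq (hk : k = B + Dᵀ *ᵥ (z * k)) (hh : h = C + D *ᵥ (w * h)) :
    B ⬝ᵥ (w * h) = (z * k) ⬝ᵥ C + ∑ r, k r * (w r - z r) * h r := by
  have hB : B ⬝ᵥ (w * h) = k ⬝ᵥ (w * h) - (z * k) ⬝ᵥ (D *ᵥ (w * h)) := by
    rw [eq_sub_iff_add_eq, dotProduct_mulVec, ← mulVec_transpose, ← add_dotProduct, ← hk]
  have hC : D *ᵥ (w * h) = h - C := eq_sub_of_add_eq' hh.symm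
  rw [hB, hC, dotProduct_sub]
  simp only [dotProduct, Pi.mul_apply, mul_sub, sub_mul, Finset.sum_sub_distrib]
  rw [sub_sub_eq_add_sub, add_comm, ← add_sub_assoc]
  simp only [mul_assoc, mul_left_comm]

theorem mulVec_state_sub (hk : k = C + D *ᵥ (z * k)) (hh : h = C + D *ᵥ (w * h)) :
    D *ᵥ (z * k - w * h) = k - h := by
  rw [mulVec_sub, eq_sub_of_add_eq' hk.symm, eq_sub_of_add_eq' hh.symm, sub_sub_sub_cancel_right]

variable [DecidableEq ι]

theorem diagonal_mulVec_eq_mul (z h : ι → R) : diagonal z *ᵥ h = z * h :=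
  funext fun r => mulVec_diagonal z h r

theorem one_sub_diagonal_mul_mulVec_state_sub (hk : k = C + D *ᵥ (z * k))
    (hh : h = C + D *ᵥ (w * h)) : (1 - diagonal w * D) *ᵥ (z * k - w * h) = (z - w) * k := by
  rw [sub_mulVec, one_mulVec, ← mulVec_mulVec, mulVec_state_sub hk hh, diagonal_mulVec_eq_mul]
  ring

/-- The state `(1 - D E_z)⁻¹ C` of the linear system `[[A, B], [C, D]]` at frequency `z`, where
`E_z` is the diagonal matrix of `z`. The inverse is `0` where `1 - D E_z` is singular. -/
noncomputable def stateVector (C : ι → R) (D : Matrix ι ι R) (z : ι → R) : ι → R :=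
  (1 - D * diagonal z)⁻¹ *ᵥ C

/-- The transfer function `z ↦ A + B E_z (1 - D E_z)⁻¹ C` of the linear system
`[[A, B], [C, D]]`, where `E_z` is the diagonal matrix of `z`. -/
noncomputable def transferFunction (A : R) (B C : ι → R) (D : Matrix ι ι R) (z : ι → R) : R :=
  A + B ⬝ᵥ ((diagonal z * (1 - D * diagonal z)⁻¹) *ᵥ C)

theorem transferFunction_eq :
    transferFunction A B C D z = A + B ⬝ᵥ (z * stateVector C D z) := by
  rw [transferFunction, stateVector, ← mulVec_mulVec, diagonal_mulVec_eq_mul]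

theorem eq_stateVector_iff (hz : IsUnit (1 - D * diagonal z)) :
    h = stateVector C D z ↔ h = C + D *ᵥ (z * h) := by
  have hdet := (isUnit_iff_isUnit_det _).1 hz
  have hsolve : h = C + D *ᵥ (z * h) ↔ (1 - D * diagonal z) *ᵥ h = C := by
    rw [sub_mulVec, one_mulVec, ← mulVec_mulVec, diagonal_mulVec_eq_mul, sub_eq_iff_eq_add]
  rw [hsolve, stateVector]
  constructor
  · rintro rfl
    rw [mulVec_mulVec, mul_nonsing_inv _ hdet, one_mulVec]
  · rintro rfl
    rw [mulVec_mulVec, nonsing_inv_mul _ hdet, one_mulVec]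

theorem stateVector_eq_add (hz : IsUnit (1 - D * diagonal z)) :
    stateVector C D z = C + D *ᵥ (z * stateVector C D z) :=
  (eq_stateVector_iff hz).1 rfl

theorem isUnit_one_sub_diagonal_mul (hz : IsUnit (1 - D * diagonal z)) :
    IsUnit (1 - diagonal z * D) := by
  rwa [isUnit_iff_isUnit_det, ← det_one_sub_mul_comm, ← isUnit_iff_isUnit_det]

theorem isUnit_one_sub_transpose_mul (hz : IsUnit (1 - D * diagonal z)) :
    IsUnit (1 - Dᵀ * diagonal z) := by
  rw [← isUnit_transpose]
  simpa using isUnit_one_sub_diagonal_mul hz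

theorem transferFunction_sub_transferFunction (hz : IsUnit (1 - D * diagonal z))
    (hw : IsUnit (1 - D * diagonal w)) :
    transferFunction A B C D z - transferFunction A B C D w =
      ∑ r, stateVector B Dᵀ z r * (z r - w r) * stateVector C D w r := by
  have hk := stateVector_eq_add (C := B) (isUnit_one_sub_transpose_mul hz)
  rw [transferFunction_eq, transferFunction_eq,
    dotProduct_mul_state_eq hk (stateVector_eq_add hz),
    dotProduct_mul_state_eq hk (stateVector_eq_add hw)]
  simp [mul_sub, sub_mul, Finset.sum_sub_distrib]

end Algebra

section Unitary

variable [Fintype ι] {𝕜 : Type*} [RCLike 𝕜]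

theorem sumElim_mul_dotProduct_star_eq_iff {a b : 𝕜} {z h : ι → 𝕜} :
    Sum.elim (fun _ : Fin 1 => a) (z * h) ⬝ᵥ star (Sum.elim (fun _ => a) (z * h)) =
        Sum.elim (fun _ : Fin 1 => b) h ⬝ᵥ star (Sum.elim (fun _ => b) h) ↔
      ∑ r, (1 - ‖z r‖ ^ 2) * ‖h r‖ ^ 2 = ‖a‖ ^ 2 - ‖b‖ ^ 2 := by
  have hself : ∀ (c : 𝕜) (u : ι → 𝕜),
      Sum.elim (fun _ : Fin 1 => c) u ⬝ᵥ star (Sum.elim (fun _ => c) u) =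
        ((‖c‖ ^ 2 + ∑ r, ‖u r‖ ^ 2 : ℝ) : 𝕜) := by
    intro c u
    simp [dotProduct, RCLike.mul_conj]
  rw [hself, hself, RCLike.ofReal_inj]
  simp only [Pi.mul_apply, norm_mul, mul_pow, sub_mul, one_mul, Finset.sum_sub_distrib]
  constructor <;> intro h <;> linarith

variable [DecidableEq ι] {A : 𝕜} {B C : ι → 𝕜} {D : Matrix ι ι 𝕜} {z : ι → 𝕜}

theorem isUnit_one_sub_mul_diagonal (hV : colligation A B C D ∈ unitaryGroup (Fin 1 ⊕ ι) 𝕜)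
    (hz : ‖z‖ < 1) : IsUnit (1 - D * diagonal z) := by
  rw [← mulVec_injective_iff_isUnit]
  refine (injective_iff_map_eq_zero (mulVecLin _)).2 fun u hu => ?_
  have hDu : u = D *ᵥ (z * u) := by
    rw [mulVecLin_apply, sub_mulVec, one_mulVec, sub_eq_zero, ← mulVec_mulVec,
      diagonal_mulVec_eq_mul] at hu
    exact hu
  have henergy := mulVec_dotProduct_star_mulVec hV (Sum.elim (fun _ => 0) (z * u))
    (Sum.elim (fun _ => 0) (z * u))
  rw [colligation_mulVec, zero_smul, zero_add, ← hDu, eq_comm,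
    sumElim_mul_dotProduct_star_eq_iff, mul_zero, zero_add, norm_zero] at henergy
  have hpos : ∀ r, 0 < 1 - ‖z r‖ ^ 2 := fun r => by
    nlinarith [norm_nonneg (z r), norm_le_pi_norm z r]
  have hterm : ∀ r ∈ Finset.univ, 0 ≤ (1 - ‖z r‖ ^ 2) * ‖u r‖ ^ 2 := fun r _ =>
    mul_nonneg (hpos r).le (sq_nonneg _)
  have hsum : ∑ r, (1 - ‖z r‖ ^ 2) * ‖u r‖ ^ 2 = 0 :=
    le_antisymm (by nlinarith [sq_nonneg ‖B ⬝ᵥ (z * u)‖]) (Finset.sum_nonneg hterm)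
  funext r
  simpa [(hpos r).ne'] using (Finset.sum_eq_zero_iff_of_nonneg hterm).1 hsum r (Finset.mem_univ r)

theorem sum_mul_norm_stateVector_sq (hV : colligation A B C D ∈ unitaryGroup (Fin 1 ⊕ ι) 𝕜)
    (hz : IsUnit (1 - D * diagonal z)) :
    ∑ r, (1 - ‖z r‖ ^ 2) * ‖stateVector C D z r‖ ^ 2 = 1 - ‖transferFunction A B C D z‖ ^ 2 := by
  set x := Sum.elim (fun _ : Fin 1 => (1 : 𝕜)) (z * stateVector C D z)
  have henergy := mulVec_dotProduct_star_mulVec hV x x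
  rwa [colligation_mulVec, one_smul, mul_one, ← stateVector_eq_add hz, ← transferFunction_eq,
    eq_comm, sumElim_mul_dotProduct_star_eq_iff, norm_one, one_pow] at henergy

end Unitary

section Derivative

open scoped Matrix.Norms.L2Operator

variable [Fintype ι] [DecidableEq ι] {𝕜 : Type*} [RCLike 𝕜] {A : 𝕜} {B C : ι → 𝕜}
  {D : Matrix ι ι 𝕜} {z : ι → 𝕜}

theorem differentiable_one_sub_mul_diagonal (D : Matrix ι ι 𝕜) :
    Differentiable 𝕜 fun z : ι → 𝕜 => 1 - D * diagonal z :=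
  ((LinearMap.toContinuousLinearMap (diagonalLinearMap ι 𝕜 𝕜)).differentiable.const_mul
    D).const_sub 1

theorem eventually_isUnit_one_sub_mul_diagonal (hz : IsUnit (1 - D * diagonal z)) :
    ∀ᶠ w : ι → 𝕜 in 𝓝 z, IsUnit (1 - D * diagonal w) :=
  (differentiable_one_sub_mul_diagonal D).continuous.continuousAt.preimage_mem_nhds
    (Units.isOpen.mem_nhds hz)

theorem differentiableAt_stateVector (hz : IsUnit (1 - D * diagonal z)) :
    DifferentiableAt 𝕜 (stateVector C D) z := by
  have hinv : DifferentiableAt 𝕜 (fun w : ι → 𝕜 => (1 - D * diagonal w)⁻¹) z := by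
    simp only [nonsing_inv_eq_ringInverse]
    exact (differentiableAt_inverse hz).comp z (differentiable_one_sub_mul_diagonal D z)
  exact (LinearMap.toContinuousLinearMap ((mulVecBilin 𝕜 𝕜).flip C)).differentiableAt.comp z hinv

theorem differentiableAt_transferFunction (hz : IsUnit (1 - D * diagonal z)) :
    DifferentiableAt 𝕜 (transferFunction A B C D) z := by
  have hstate := differentiableAt_pi.1 (differentiableAt_stateVector (C := C) hz)
  rw [funext fun z => transferFunction_eq (A := A) (B := B) (C := C) (D := D) (z := z)]
  refine (DifferentiableAt.fun_sum fun r _ => ?_).const_add A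
  exact ((differentiableAt_apply r z).mul (hstate r)).const_mul (B r)

theorem hasDerivAt_transferFunction_update (hz : IsUnit (1 - D * diagonal z)) (r : ι) :
    HasDerivAt (fun t => transferFunction A B C D (Function.update z r t))
      (stateVector B Dᵀ z r * stateVector C D z r) (z r) := by
  have hupdate : Tendsto (Function.update z r) (𝓝 (z r)) (𝓝 z) :=
    (continuous_const.update r continuous_id).tendsto' _ _ (Function.update_eq_self r z)
  have hstate : ContinuousAt (stateVector B Dᵀ) z :=
    (differentiableAt_stateVector (isUnit_one_sub_transpose_mul hz)).continuousAt
  rw [hasDerivAt_iff_tendsto_slope]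
  refine Tendsto.congr' ?_ ((((tendsto_pi_nhds.1 hstate.tendsto r).comp hupdate).mul_const
    (stateVector C D z r)).mono_left nhdsWithin_le_nhds)
  filter_upwards [nhdsWithin_le_nhds
    (hupdate.eventually (eventually_isUnit_one_sub_mul_diagonal hz)), self_mem_nhdsWithin]
    with t ht htr
  rw [slope_def_field, Function.update_eq_self, transferFunction_sub_transferFunction ht hz,
    Finset.sum_eq_single r (fun j _ hj => by simp [hj]) (by simp), Function.update_self,
    eq_div_iff (sub_ne_zero.2 htr), Function.comp_apply]
  ring

theorem sum_mul_norm_deriv_transferFunction_update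
    (hV : colligation A B C D ∈ unitaryGroup (Fin 1 ⊕ ι) 𝕜) (hS : (colligation A B C D).IsSymm)
    (hz : IsUnit (1 - D * diagonal z)) :
    ∑ r, (1 - ‖z r‖ ^ 2) *
        ‖deriv (fun t => transferFunction A B C D (Function.update z r t)) (z r)‖ =
      1 - ‖transferFunction A B C D z‖ ^ 2 := by
  obtain ⟨rfl, hD⟩ := isSymm_colligation_iff.1 hS
  simp_rw [(hasDerivAt_transferFunction_update hz _).deriv, hD.eq, norm_mul, ← sq]
  exact sum_mul_norm_stateVector_sq hV hz

end Derivative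

section Uniqueness

variable [Fintype ι] [DecidableEq ι] {𝕜 : Type*} [NontriviallyNormedField 𝕜] {A : 𝕜}
  {B C C' : ι → 𝕜} {D D' : Matrix ι ι 𝕜} {p : ι → 𝕜}

theorem eq_and_eq_of_eventually_state_eq {k : (ι → 𝕜) → ι → 𝕜} (hp : IsUnit (1 - D * diagonal p))
    (hk : ∀ᶠ z in 𝓝 p, k z = C + D *ᵥ (z * k z)) (hk' : ∀ᶠ z in 𝓝 p, k z = C' + D' *ᵥ (z * k z))
    (hne : ∀ᶠ z in 𝓝 p, ∀ r, k z r ≠ 0) : C = C' ∧ D = D' := by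
  have hunit := isUnit_one_sub_diagonal_mul hp
  set Q := (1 - diagonal p * D)⁻¹
  have hcolumn : ∀ r, (D * Q) *ᵥ Pi.single r 1 = (D' * Q) *ᵥ Pi.single r 1 := by
    intro r
    have hshift : Tendsto (fun t : 𝕜 => p + Pi.single r t) (𝓝[≠] 0) (𝓝 p) :=
      ((continuous_const.add (continuous_single r)).tendsto' _ _ (by simp)).mono_left
        nhdsWithin_le_nhds
    obtain ⟨t, ⟨⟨hkz, hkz'⟩, hnez⟩, ht⟩ :=
      ((hshift.eventually ((hk.and hk').and hne)).and self_mem_nhdsWithin).exists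
    set z := p + Pi.single r t
    have hsingle : (1 - diagonal p * D) *ᵥ (z * k z - p * k p) =
        (t * k z r) • Pi.single r 1 := by
      rw [one_sub_diagonal_mul_mulVec_state_sub hkz hk.self_of_nhds, add_sub_cancel_left,
        ← Pi.single_mul_left, ← Pi.single_smul', smul_eq_mul, mul_one]
    have hdiff : z * k z - p * k p = (t * k z r) • Q *ᵥ Pi.single r 1 := by
      rw [← mulVec_smul, ← hsingle, mulVec_mulVec,
        nonsing_inv_mul _ ((isUnit_iff_isUnit_det _).1 hunit), one_mulVec]
    refine smul_right_injective (ι → 𝕜) (mul_ne_zero ht (hnez r)) ?_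
    simp only [← mulVec_mulVec, ← mulVec_smul, ← hdiff, mulVec_state_sub hkz hk.self_of_nhds,
      mulVec_state_sub hkz' hk'.self_of_nhds]
  have hD : D = D' :=
    ((isUnit_nonsing_inv_iff).2 hunit).mul_right_cancel (ext_of_mulVec_single hcolumn)
  subst hD
  exact ⟨add_right_cancel (hk.self_of_nhds.symm.trans hk'.self_of_nhds), rfl⟩

theorem isSymm_colligation_of_eventually_stateVector_eq {A : 𝕜}
    (hp : ∀ᶠ z in 𝓝 p, IsUnit (1 - D * Matrix.diagonal z))
    (h : ∀ᶠ z in 𝓝 p, stateVector B Dᵀ z = stateVector C D z)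
    (hne : ∀ᶠ z in 𝓝 p, ∀ r, stateVector C D z r ≠ 0) : (colligation A B C D).IsSymm := by
  obtain ⟨hCB, hD⟩ := eq_and_eq_of_eventually_state_eq hp.self_of_nhds
    (hp.mono fun z hz => stateVector_eq_add hz)
    ((hp.and h).mono fun z ⟨hz, hzk⟩ => by
      rw [← hzk]
      exact stateVector_eq_add (isUnit_one_sub_transpose_mul hz)) hne
  exact isSymm_colligation_iff.2 ⟨hCB.symm, hD.symm⟩

end Uniqueness

section Realization

variable [Fintype ι] [DecidableEq ι] {U : Set (ι → ℂ)} {f : (ι → ℂ) → ℂ} {h : (ι → ℂ) → ι → ℂ}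

-- Agler's lurking isometry: by `heq` the map `(1, z h z) ↦ (f z, h z)` preserves norms.
theorem exists_colligation_of_sum_eq (hU : IsOpen U) (hc : Convex ℝ U)
    (hf : DifferentiableOn ℂ f U) (hh : DifferentiableOn ℂ h U)
    (heq : ∀ z ∈ U, ∑ r, (1 - ‖z r‖ ^ 2) * ‖h z r‖ ^ 2 = 1 - ‖f z‖ ^ 2) :
    ∃ A B C D, colligation A B C D ∈ unitaryGroup (Fin 1 ⊕ ι) ℂ ∧
      ∀ z ∈ U, f z = A + B ⬝ᵥ (z * h z) ∧ h z = C + D *ᵥ (z * h z) := by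
  set X : (ι → ℂ) → Fin 1 ⊕ ι → ℂ := fun z => Sum.elim (fun _ => 1) (z * h z)
  set Y : (ι → ℂ) → Fin 1 ⊕ ι → ℂ := fun z => Sum.elim (fun _ => f z) (h z)
  have hX : DifferentiableOn ℂ X U := differentiableOn_pi.2 fun
    | .inl _ => differentiableOn_const 1
    | .inr r => ((differentiable_apply r).differentiableOn).mul (differentiableOn_pi.1 hh r)
  have hY : DifferentiableOn ℂ Y U := differentiableOn_pi.2 fun
    | .inl _ => hf
    | .inr r => differentiableOn_pi.1 hh r
  have hself : ∀ z ∈ U, X z ⬝ᵥ star (X z) = Y z ⬝ᵥ star (Y z) := fun z hz =>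
    sumElim_mul_dotProduct_star_eq_iff.2 (by simpa using heq z hz)
  obtain ⟨V, hV, hXY⟩ := exists_mem_unitaryGroup_mulVec_eq (x := fun z : U => X z)
    (y := fun z : U => Y z)
    fun z w => dotProduct_star_eq_of_forall_self hU hc hX hY hself z.2 w.2
  obtain ⟨A, B, C, D, rfl⟩ := exists_eq_colligation V
  refine ⟨A, B, C, D, hV, fun z hz => ?_⟩
  have hz := hXY ⟨z, hz⟩
  simp only [X, Y, colligation_mulVec, mul_one, one_smul] at hz
  exact ⟨(congrFun hz (.inl 0)).symm, funext fun r => (congrFun hz (.inr r)).symm⟩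

theorem exists_transferFunction_eqOn {W : Set (ι → ℂ)} (hW : IsOpen W) (hc : Convex ℝ W)
    (hne : W.Nonempty) (hWball : W ⊆ ball 0 1) (hf : DifferentiableOn ℂ f (ball 0 1))
    (hh : DifferentiableOn ℂ h W)
    (heq : ∀ z ∈ W, ∑ r, (1 - ‖z r‖ ^ 2) * ‖h z r‖ ^ 2 = 1 - ‖f z‖ ^ 2) :
    ∃ A B C D, colligation A B C D ∈ unitaryGroup (Fin 1 ⊕ ι) ℂ ∧
      EqOn f (transferFunction A B C D) (ball 0 1) ∧ EqOn h (stateVector C D) W := by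
  obtain ⟨A, B, C, D, hV, hsys⟩ := exists_colligation_of_sum_eq hW hc (hf.mono hWball) hh heq
  have hunit : ∀ z ∈ ball (0 : ι → ℂ) 1, IsUnit (1 - D * Matrix.diagonal z) := fun z hz =>
    isUnit_one_sub_mul_diagonal hV (mem_ball_zero_iff.1 hz)
  have hstate : EqOn h (stateVector C D) W := fun z hz =>
    (eq_stateVector_iff (hunit z (hWball hz))).2 (hsys z hz).2
  have htransfer : EqOn f (transferFunction A B C D) W := fun z hz => by
    rw [transferFunction_eq, ← hstate hz, (hsys z hz).1]
  obtain ⟨p, hp⟩ := hne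
  refine ⟨A, B, C, D, hV, ?_, hstate⟩
  exact eqOn_of_eventuallyEq_of_convex isOpen_ball (convex_ball 0 1) hf
    (fun z hz => (differentiableAt_transferFunction (hunit z hz)).differentiableWithinAt)
    (hWball hp) (htransfer.eventuallyEq_of_mem (hW.mem_nhds hp))

end Realization

end Colligation

section Knese

variable {ι : Type*} [DecidableEq ι] {f : (ι → ℂ) → ℂ}

section PartialDerivative

variable [Finite ι] {U : Set (ι → ℂ)}

theorem deriv_update_eq_fderiv_apply_single {z : ι → ℂ} (hf : DifferentiableAt ℂ f z) (r : ι) :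
    deriv (fun t => f (Function.update z r t)) (z r) = fderiv ℂ f z (Pi.single r 1) := by
  have := Fintype.ofFinite ι
  have hfz : HasFDerivAt f (fderiv ℂ f z) (Function.update z r (z r)) := by
    simpa only [Function.update_eq_self] using hf.hasFDerivAt
  exact (hfz.comp_hasDerivAt (z r) (hasDerivAt_update z r (z r))).deriv

theorem exists_fderiv_apply_single_ne_zero (hU : IsOpen U) (hc : Convex ℝ U)
    (hf : DifferentiableOn ℂ f U) {r : ι}
    (hdep : ∃ z ∈ U, ∃ t, Function.update z r t ∈ U ∧ f z ≠ f (Function.update z r t)) :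
    ∃ z ∈ U, fderiv ℂ f z (Pi.single r 1) ≠ 0 := by
  have := Fintype.ofFinite ι
  obtain ⟨x, hx, t, hy, hxy⟩ := hdep
  obtain ⟨z, hz, hzr⟩ := exists_fderiv_sub_ne_zero hU hc hf hx hy hxy
  refine ⟨z, hz, fun hzero => hzr ?_⟩
  have hsub : Function.update x r t - x = (t - x r) • Pi.single r 1 := by
    ext j
    rcases eq_or_ne j r with rfl | hj <;> simp [*]
  rw [hsub, map_smul, hzero, smul_zero]

theorem exists_forall_sq_eq_fderiv_apply_single (hU : IsOpen U) (hc : Convex ℝ U)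
    (hne : U.Nonempty) (hf : DifferentiableOn ℂ f U)
    (hdep : ∀ r, ∃ z ∈ U, ∃ t, Function.update z r t ∈ U ∧ f z ≠ f (Function.update z r t)) :
    ∃ p ∈ U, ∃ h : (ι → ℂ) → ι → ℂ, ∀ᶠ z in 𝓝 p, DifferentiableAt ℂ h z ∧
      ∀ r, h z r ^ 2 = fderiv ℂ f z (Pi.single r 1) ∧ h z r ≠ 0 := by
  have := Fintype.ofFinite ι
  have hf' : ∀ r : ι, DifferentiableOn ℂ (fun z => fderiv ℂ f z (Pi.single r 1)) U := fun r =>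
    differentiableOn_fderiv_apply hU hf _
  obtain ⟨p, hp, hpr⟩ := exists_forall_ne_zero_of_convex hU hc hne hf'
    (fun r => exists_fderiv_apply_single_ne_zero hU hc hf (hdep r)) Finset.univ
  have hnear : ∀ r : ι, ∀ᶠ z in 𝓝 p,
      DifferentiableAt ℂ (fun z => fderiv ℂ f z (Pi.single r 1)) z := fun r =>
    (hU.eventually_mem hp).mono fun z hz => (hf' r).differentiableAt (hU.mem_nhds hz)
  choose h hh using fun r =>
    exists_eventually_pow_eq two_ne_zero (hnear r) (hpr r (Finset.mem_univ r))
  refine ⟨p, hp, fun z r => h r z, ?_⟩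
  filter_upwards [eventually_all.2 hh, eventually_all.2 fun r =>
    (hnear r).self_of_nhds.continuousAt.eventually_ne (hpr r (Finset.mem_univ r))] with z hz hz₀
  refine ⟨differentiableAt_pi.2 fun r => (hz r).1, fun r => ⟨(hz r).2, fun hzero => hz₀ r ?_⟩⟩
  rw [← (hz r).2, hzero, zero_pow two_ne_zero]

end PartialDerivative

variable [Fintype ι]

theorem mul_stateVector_eq_fderiv_apply_single {A : ℂ} {B C : ι → ℂ} {D : Matrix ι ι ℂ}
    {z : ι → ℂ} (hz : IsUnit (1 - D * diagonal z)) (hf : f =ᶠ[𝓝 z] transferFunction A B C D)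
    (r : ι) :
    stateVector B Dᵀ z r * stateVector C D z r = fderiv ℂ f z (Pi.single r 1) := by
  rw [← (hasDerivAt_transferFunction_update hz r).deriv, hf.fderiv_eq,
    deriv_update_eq_fderiv_apply_single (differentiableAt_transferFunction hz)]

theorem exists_symm_unitary_realization (hf : DifferentiableOn ℂ f (ball 0 1))
    (hdep : ∀ r, ∃ z ∈ ball (0 : ι → ℂ) 1, ∃ t,
      Function.update z r t ∈ ball 0 1 ∧ f z ≠ f (Function.update z r t))
    (heq : ∀ z ∈ ball 0 1, ∑ r, (1 - ‖z r‖ ^ 2) *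
      ‖deriv (fun t => f (Function.update z r t)) (z r)‖ = 1 - ‖f z‖ ^ 2) :
    ∃ A B C D, colligation A B C D ∈ unitaryGroup (Fin 1 ⊕ ι) ℂ ∧ (colligation A B C D).IsSymm ∧
      EqOn f (transferFunction A B C D) (ball 0 1) := by
  obtain ⟨p, hp, h, hh⟩ := exists_forall_sq_eq_fderiv_apply_single isOpen_ball (convex_ball 0 1)
    (nonempty_ball.2 one_pos) hf hdep
  obtain ⟨ε, hε, hnear⟩ := Metric.eventually_nhds_iff_ball.1 (hh.and (isOpen_ball.mem_nhds hp))
  have hball : ball p ε ⊆ ball 0 1 := fun z hz => (hnear z hz).2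
  have hsq : ∀ z ∈ ball p ε, ∀ r, h z r ^ 2 = fderiv ℂ f z (Pi.single r 1) := fun z hz r =>
    ((hnear z hz).1.2 r).1
  have hne : ∀ z ∈ ball p ε, ∀ r, h z r ≠ 0 := fun z hz r => ((hnear z hz).1.2 r).2
  have heq' : ∀ z ∈ ball p ε, ∑ r, (1 - ‖z r‖ ^ 2) * ‖h z r‖ ^ 2 = 1 - ‖f z‖ ^ 2 := by
    intro z hz
    simp_rw [← heq z (hball hz), ← norm_pow, hsq z hz,
      deriv_update_eq_fderiv_apply_single (hf.differentiableAt (isOpen_ball.mem_nhds (hball hz)))]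
  obtain ⟨A, B, C, D, hV, htransfer, hstate⟩ := exists_transferFunction_eqOn isOpen_ball
    (convex_ball p ε) (nonempty_ball.2 hε) hball hf
    (fun z hz => (hnear z hz).1.1.differentiableWithinAt) heq'
  have hunit : ∀ z ∈ ball p ε, IsUnit (1 - D * Matrix.diagonal z) := fun z hz =>
    isUnit_one_sub_mul_diagonal hV (mem_ball_zero_iff.1 (hball hz))
  have hdual : EqOn (stateVector B Dᵀ) (stateVector C D) (ball p ε) := fun z hz => by
    funext r
    have hmul := mul_stateVector_eq_fderiv_apply_single (hunit z hz)
      (htransfer.eventuallyEq_of_mem (isOpen_ball.mem_nhds (hball hz))) r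
    rw [← hsq z hz, ← hstate hz, sq] at hmul
    rw [← hstate hz]
    exact mul_right_cancel₀ (hne z hz r) hmul
  have hp' : ∀ᶠ z in 𝓝 p, z ∈ ball p ε := ball_mem_nhds p hε
  exact ⟨A, B, C, D, hV, isSymm_colligation_of_eventually_stateVector_eq (hp'.mono hunit)
    (hp'.mono hdual) (hp'.mono fun z hz => hstate hz ▸ hne z hz), htransfer⟩

theorem knese_equality_schwarz_general (hf : DifferentiableOn ℂ f (ball 0 1))
    (hdep : ∀ r, ∃ z ∈ ball (0 : ι → ℂ) 1, ∃ t,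
      Function.update z r t ∈ ball 0 1 ∧ f z ≠ f (Function.update z r t)) :
    (∀ z ∈ ball 0 1, ∑ r, (1 - ‖z r‖ ^ 2) *
        ‖deriv (fun t => f (Function.update z r t)) (z r)‖ = 1 - ‖f z‖ ^ 2) ↔
      ∃ A B C D, colligation A B C D ∈ unitaryGroup (Fin 1 ⊕ ι) ℂ ∧
        (colligation A B C D).IsSymm ∧
        ∀ z ∈ ball 0 1, IsUnit (1 - D * Matrix.diagonal z) ∧ f z = transferFunction A B C D z := by
  constructor
  · intro heq
    obtain ⟨A, B, C, D, hV, hS, hfV⟩ := exists_symm_unitary_realization hf hdep heq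
    exact ⟨A, B, C, D, hV, hS, fun z hz =>
      ⟨isUnit_one_sub_mul_diagonal hV (mem_ball_zero_iff.1 hz), hfV hz⟩⟩
  · rintro ⟨A, B, C, D, hV, hS, hfV⟩ z hz
    rw [(hfV z hz).2, ← sum_mul_norm_deriv_transferFunction_update hV hS (hfV z hz).1]
    have hnear : f =ᶠ[𝓝 z] transferFunction A B C D := by
      filter_upwards [isOpen_ball.mem_nhds hz] with w hw using (hfV w hw).2
    refine Finset.sum_congr rfl fun r _ => ?_
    rw [deriv_update_eq_fderiv_apply_single (hf.differentiableAt (isOpen_ball.mem_nhds hz)),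
      hnear.fderiv_eq,
      deriv_update_eq_fderiv_apply_single (differentiableAt_transferFunction (hfV z hz).1)]

end Knese

theorem polydisk_eq_ball (d : ℕ) : Polydisk d = ball 0 1 := by
  ext z
  exact (mem_ball_zero_iff.trans (pi_norm_lt_iff one_pos)).symm

/-- **Knese's theorem on equality in the polydisk Schwarz lemma.** Let `f` be analytic on
`𝔻^d`, bounded by `1`, and depending on all `d` variables. Then equality
`∑_r (1 - |λ^r|²)|∂f/∂λ^r(λ)| = 1 - |f(λ)|²` holds at every `λ ∈ 𝔻^d` if and only if `f`
has a realization `f(λ) = A + B E_λ (I - D E_λ)⁻¹ C` whose `(1+d) × (1+d)` block matrix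
`V = [[A, B], [C, D]]` is unitary and symmetric (equal to its own transpose). -/
theorem knese_equality_schwarz {d : ℕ} (hd : 1 ≤ d) (f : (Fin d → ℂ) → ℂ)
    (hf : DifferentiableOn ℂ f (Polydisk d))
    (hb : ∀ lam ∈ Polydisk d, ‖f lam‖ ≤ 1)
    (hdep : ∀ r : Fin d, ∃ mu ∈ Polydisk d, ∃ t : ℂ,
      Function.update mu r t ∈ Polydisk d ∧ f mu ≠ f (Function.update mu r t)) :
    (∀ lam ∈ Polydisk d,
        ∑ r : Fin d, (1 - ‖lam r‖ ^ 2) *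
            ‖deriv (fun t : ℂ => f (Function.update lam r t)) (lam r)‖ =
          1 - ‖f lam‖ ^ 2) ↔
    ∃ (A : ℂ) (B : Fin d → ℂ) (C : Fin d → ℂ) (D : Matrix (Fin d) (Fin d) ℂ),
      (Matrix.fromBlocks (Matrix.of fun (_ : Fin 1) (_ : Fin 1) => A)
          (Matrix.of fun (_ : Fin 1) j => B j)
          (Matrix.of fun i (_ : Fin 1) => C i) D) ∈
        Matrix.unitaryGroup (Fin 1 ⊕ Fin d) ℂ ∧
      (Matrix.fromBlocks (Matrix.of fun (_ : Fin 1) (_ : Fin 1) => A)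
          (Matrix.of fun (_ : Fin 1) j => B j)
          (Matrix.of fun i (_ : Fin 1) => C i) D).IsSymm ∧
      ∀ lam ∈ Polydisk d,
        IsUnit (1 - D * Matrix.diagonal lam) ∧
        f lam = A + B ⬝ᵥ ((Matrix.diagonal lam * (1 - D * Matrix.diagonal lam)⁻¹) *ᵥ C) := by
  simp only [polydisk_eq_ball] at hf hdep ⊢
  exact knese_equality_schwarz_general hf hdep
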